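/- Let (f, f♭) : (R, P) → (A, M) be a map of pre-log rings and let X be an A-module. Let C = (A ⊗_R A) ⊗_{ℤ[M ⊕_P M]} ℤ[(M ⊕_P M)^rep] be the augmented commutative A-algebra with augmentation ε : C → A and augmentation ideal I = ker(ε), constructed as follows: M ⊕_P M is the pushout in commutative monoids of M ← P → M (both legs f♭), μ : M ⊕_P M → M is the codiagonal, (M ⊕_P M)^rep is the pullback of η : M → M^gp and μ^gp : (M ⊕_P M)^gp → M^gp, the map ℤ[M ⊕_P M] → A ⊗_R A is induced by m ↦ α(m) ⊗ 1 and m ↦ 1 ⊗ α(m), the map ℤ[M ⊕_P M] → ℤ[(M ⊕_P M)^rep] is induced by the canonical map into the repletion, and ε is induced by the multiplication A ⊗_R A → A and by α composed with the pullback projection (M ⊕_P M)^rep → M. Then there is a bijection, natural in X, between the set of log derivations of (A, M) over (R, P) with values in X and the set of A-module homomorphisms I/I² → X. -/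

import Mathlib

open scoped TensorProduct

universe u

/-- `η : M →* G` exhibits the abelian group `G` as the group completion
(Grothendieck group) of the commutative monoid `M`. -/
def IsGroupCompletion {M G : Type u} [CommMonoid M] [CommGroup G]
    (η : M →* G) : Prop :=
  ∀ (H : Type u) [CommGroup H] (f : M →* H), ∃! g : G →* H, g.comp η = f

/-- `iM, iN` exhibit `Q` as the pushout in commutative monoids of the diagram
`M ← P → N` given by `f : P →* M` and `g : P →* N`. -/
def IsCommMonoidPushout {P M N Q : Type u} [CommMonoid P] [CommMonoid M]
    [CommMonoid N] [CommMonoid Q] (f : P →* M) (g : P →* N)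
    (iM : M →* Q) (iN : N →* Q) : Prop :=
  iM.comp f = iN.comp g ∧
    ∀ (H : Type u) [CommMonoid H] (jM : M →* H) (jN : N →* H),
      jM.comp f = jN.comp g → ∃! h : Q →* H, h.comp iM = jM ∧ h.comp iN = jN

/-- The pullback of two monoid homomorphisms `f : X →* Z` and `g : Y →* Z`:
the submonoid `{(x, y) : f x = g y}` of `X × Y`. -/
def pullbackSubmonoid {X Y Z : Type u} [CommMonoid X] [CommMonoid Y]
    [CommMonoid Z] (f : X →* Z) (g : Y →* Z) : Submonoid (X × Y) where
  carrier := {x | f x.1 = g x.2}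
  one_mem' := by simp
  mul_mem' := by
    intro a b ha hb
    simp only [Set.mem_setOf_eq, Prod.fst_mul, Prod.snd_mul, map_mul] at *
    rw [ha, hb]

/-- A log derivation of a pre-log ring `(A, M, α)` over `(R, P)` (relative to
`f : R → A` and `f♭ : P → M`) with values in an `A`-module `X`: a pair
`(D, δ)` where `D : A → X` is an `R`-linear derivation, `δ : M → X` is a
monoid homomorphism from the multiplicative monoid `M` to the additive monoid
of `X` vanishing on `P`, and `D(α m) = α(m) · δ(m)` for all `m`. -/
structure LogDerivation (R A P M : Type u) [CommRing R] [CommRing A]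
    [CommMonoid P] [CommMonoid M] (f : R →+* A) (fb : P →* M) (α : M →* A)
    (X : Type u) [AddCommGroup X] [Module A X] : Type u where
  D : A → X
  δ : M → X
  D_add : ∀ a b : A, D (a + b) = D a + D b
  D_smul : ∀ (r : R) (a : A), D (f r * a) = f r • D a
  leibniz : ∀ a b : A, D (a * b) = a • D b + b • D a
  delta_one : δ 1 = 0
  delta_mul : ∀ m m' : M, δ (m * m') = δ m + δ m'
  delta_base : ∀ p : P, δ (fb p) = 0
  compat : ∀ m : M, D (α m) = α m • δ m

/-- Pushforward of a log derivation along an `A`-module map. -/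
def LogDerivation.map {R A P M : Type u} [CommRing R] [CommRing A]
    [CommMonoid P] [CommMonoid M] {f : R →+* A} {fb : P →* M} {α : M →* A}
    {X X' : Type u} [AddCommGroup X] [Module A X] [AddCommGroup X'] [Module A X']
    (g : X →ₗ[A] X') (d : LogDerivation R A P M f fb α X) :
    LogDerivation R A P M f fb α X' where
  D := g ∘ d.D
  δ := g ∘ d.δ
  D_add a b := by simp [d.D_add]
  D_smul r a := by simp [d.D_smul]
  leibniz a b := by simp [d.leibniz]
  delta_one := by simp [d.delta_one]
  delta_mul m m' := by simp [d.delta_mul]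
  delta_base p := by simp [d.delta_base]
  compat m := by simp [d.compat]

/-!
`A`-linear maps `I/I² → X` are `A`-derivations `C → X`, that is, lifts of the augmentation of `C` to
the square-zero extension `A ⊕ X`. By the universal property of `C` such a lift is a derivation `D`
of the second factor `A` together with a compatible homomorphism on `W = (M ⊕_P M)^rep`. The first
copy of `M` splits the pullback as `W ≅ M × ker μ^gp`, and homomorphisms from `ker μ^gp` to an
abelian group correspond to homomorphisms from `M` that vanish on `P`: the logarithmic part `δ`.
-/

section Augmentation

variable (A C : Type*) {X : Type*} [CommRing A] [CommRing C] [Algebra A C] [Algebra C A]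
  [IsScalarTower A C A]

/-- The universal derivation `c ↦ [c - ε c]` of an augmented `A`-algebra `C` into `I/I²`, where the
augmentation `ε` is `algebraMap C A` and `I` is its kernel. -/
def augmentationDerivation : Derivation A C (RingHom.ker (algebraMap C A)).Cotangent :=
  Derivation.mk'
    ((RingHom.ker (algebraMap C A)).toCotangent.restrictScalars A ∘ₗ
      LinearMap.codRestrict ((RingHom.ker (algebraMap C A)).restrictScalars A)
        (LinearMap.id - Algebra.linearMap A C ∘ₗ (IsScalarTower.toAlgHom A C A).toLinearMap)
        fun c => by
          simp [RingHom.mem_ker, ← IsScalarTower.algebraMap_apply A C A])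
    fun a b => by
      set I := RingHom.ker (algebraMap C A)
      let d (c : C) : C := c - algebraMap A C (algebraMap C A c)
      have hd (c : C) : d c ∈ I := by
        simp [d, I, RingHom.mem_ker, ← IsScalarTower.algebraMap_apply A C A]
      change I.toCotangent ⟨d (a * b), hd _⟩ =
        a • I.toCotangent ⟨d b, hd _⟩ + b • I.toCotangent ⟨d a, hd _⟩
      rw [← map_smul, ← map_smul, ← map_add, Ideal.toCotangent_eq, pow_two]
      have hdiff : d (a * b) - (a * d b + b * d a) = -(d a * d b) := by
        simp only [d, map_mul]
        ring
      exact hdiff ▸ neg_mem (Ideal.mul_mem_mul (hd a) (hd b))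

variable {A C}

theorem augmentationDerivation_coe (x : RingHom.ker (algebraMap C A)) :
    augmentationDerivation A C x = (RingHom.ker (algebraMap C A)).toCotangent x := by
  refine congrArg (RingHom.ker (algebraMap C A)).toCotangent (Subtype.ext ?_)
  change (x : C) - algebraMap A C (algebraMap C A x) = x
  rw [RingHom.mem_ker.mp x.2, map_zero, sub_zero]

theorem isScalarTower_cotangent_ker_algebraMap :
    IsScalarTower C A (RingHom.ker (algebraMap C A)).Cotangent :=
  .of_algebraMap_smul fun c x => by
    rw [← sub_eq_zero, ← algebraMap_smul C (algebraMap C A c) x, ← sub_smul]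
    refine Ideal.Cotangent.smul_eq_zero_of_mem ?_ x
    rw [RingHom.mem_ker, map_sub, ← IsScalarTower.algebraMap_apply A C A, Algebra.algebraMap_self,
      RingHom.id_apply, sub_self]

variable [AddCommGroup X] [Module A X]

theorem cotangent_hom_ext {φ φ' : (RingHom.ker (algebraMap C A)).Cotangent →ₗ[A] X}
    (h : ∀ c, φ (augmentationDerivation A C c) = φ' (augmentationDerivation A C c)) : φ = φ' :=
  LinearMap.ext fun x => by
    obtain ⟨x, rfl⟩ := Ideal.toCotangent_surjective _ x
    simpa only [augmentationDerivation_coe] using h x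

theorem exists_comp_augmentationDerivation [Module C X] [IsScalarTower A C X]
    [IsScalarTower C A X] (D : Derivation A C X) :
    ∃ φ : (RingHom.ker (algebraMap C A)).Cotangent →ₗ[A] X,
      ∀ c, φ (augmentationDerivation A C c) = D c := by
  have ker_smul {c : C} (hc : c ∈ RingHom.ker (algebraMap C A)) (x : X) : c • x = 0 := by
    rw [← algebraMap_smul A c x, RingHom.mem_ker.mp hc, zero_smul]
  let D₀ : RingHom.ker (algebraMap C A) →ₗ[C] X :=
    { toFun := fun x => D x
      map_add' := fun x y => map_add D (x : C) y
      map_smul' := fun c x => by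
        rw [Submodule.coe_smul, smul_eq_mul, D.leibniz, ker_smul x.2, add_zero, RingHom.id_apply] }
  have D₀_mul (x y : RingHom.ker (algebraMap C A)) : D₀ (x * y) = 0 := by
    change D ((x : C) * y) = 0
    rw [D.leibniz, ker_smul x.2, ker_smul y.2, add_zero]
  refine ⟨(Ideal.Cotangent.lift D₀ D₀_mul).restrictScalars A, fun c => ?_⟩
  change D (c - algebraMap A C (algebraMap C A c)) = D c
  rw [map_sub, D.map_algebraMap, sub_zero]

end Augmentation

section UniversalProperties

variable {P M N Q G H : Type u} [CommMonoid P] [CommMonoid M] [CommMonoid N] [CommMonoid Q]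

theorem IsGroupCompletion.hom_ext [CommGroup G] [CommGroup H] {η : M →* G}
    (hη : IsGroupCompletion η) {g g' : G →* H} (h : g.comp η = g'.comp η) : g = g' :=
  (hη H (g'.comp η)).unique h rfl

theorem IsCommMonoidPushout.hom_ext [CommMonoid H] {f : P →* M} {g : P →* N} {iM : M →* Q}
    {iN : N →* Q} (hQ : IsCommMonoidPushout f g iM iN) {h h' : Q →* H}
    (hM : h.comp iM = h'.comp iM) (hN : h.comp iN = h'.comp iN) : h = h' :=
  (hQ.2 H (h'.comp iM) (h'.comp iN) (by simp only [MonoidHom.comp_assoc, hQ.1])).unique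
    ⟨hM, hN⟩ ⟨rfl, rfl⟩

end UniversalProperties

/-- The structure of `W = (M ⊕_P M)^rep` on which log derivations depend: the maps
`M → W → M` given by the two coprojections and the codiagonal, the splitting `W ≅ M × ker(aug)`
whose second component is `unitPart`, and the universal property of `ker(aug)`, stated for
homomorphisms `W → H` trivial on the first copy of `M` since these factor through `unitPart`. -/
structure Repletion {P M : Type u} [CommMonoid P] [CommMonoid M] (fb : P →* M)
    (W : Type u) [CommMonoid W] where
  aug : W →* M
  inl : M →* W
  inr : M →* W
  unitPart : W →* W
  aug_inl : ∀ m, aug (inl m) = m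
  aug_inr : ∀ m, aug (inr m) = m
  inl_base : ∀ p, inl (fb p) = inr (fb p)
  inl_aug_mul_unitPart : ∀ w, inl (aug w) * unitPart w = w
  aug_unitPart : ∀ w, aug (unitPart w) = 1
  unitPart_inl : ∀ m, unitPart (inl m) = 1
  existsUnique_hom : ∀ (H : Type u) [CommGroup H] (δ : M →* H), δ.comp fb = 1 →
    ∃! e : W →* H, e.comp inl = 1 ∧ e.comp inr = δ

section PullbackRepletion

variable {P M Q Mgp Qgp : Type u} [CommMonoid P] [CommMonoid M] [CommMonoid Q] [CommGroup Mgp]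
  [CommGroup Qgp] {fb : P →* M} {i₁ i₂ : M →* Q} {μ : Q →* M} {η : M →* Mgp} {ηQ : Q →* Qgp}
  {μgp : Qgp →* Mgp} {s : Mgp →* Qgp}

theorem codiagonal_comp_section (hη : IsGroupCompletion η) (hμ₁ : μ.comp i₁ = MonoidHom.id M)
    (hμgp : μgp.comp ηQ = η.comp μ) (hs : s.comp η = ηQ.comp i₁) :
    μgp.comp s = MonoidHom.id Mgp :=
  hη.hom_ext <| by
    rw [MonoidHom.comp_assoc, hs, ← MonoidHom.comp_assoc, hμgp, MonoidHom.comp_assoc, hμ₁,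
      MonoidHom.comp_id, MonoidHom.id_comp]

/-- The projection of `(M ⊕_P M)^gp` onto the kernel of `μ^gp` along a section `s` of `μ^gp`,
with the kernel embedded in the pullback as `{1} × ker μ^gp`. -/
def kernelProjection (η : M →* Mgp) (hs : μgp.comp s = MonoidHom.id Mgp) :
    Qgp →* pullbackSubmonoid η μgp :=
  MonoidHom.codRestrict (MonoidHom.prod 1 (MonoidHom.id Qgp / s.comp μgp)) _ fun q => by
    change η 1 = μgp (q / s (μgp q))
    rw [map_one, map_div, show μgp (s (μgp q)) = μgp q from DFunLike.congr_fun hs _, div_self']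

theorem mul_kernelProjection (hμ₁ : μ.comp i₁ = MonoidHom.id M) (hsη : s.comp η = ηQ.comp i₁)
    (hs : μgp.comp s = MonoidHom.id Mgp) {ρ : Q →* pullbackSubmonoid η μgp}
    (hρ : ∀ x, (ρ x : M × Qgp) = (μ x, ηQ x)) (w : pullbackSubmonoid η μgp) :
    ρ (i₁ w.1.1) * kernelProjection η hs w.1.2 = w := by
  have hw : η w.1.1 = μgp w.1.2 := w.2
  have hi₁ : s (μgp w.1.2) = ηQ (i₁ w.1.1) := hw ▸ DFunLike.congr_fun hsη w.1.1
  refine Subtype.ext (Prod.ext ?_ ?_)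
  · change (ρ (i₁ w.1.1)).1.1 * 1 = w.1.1
    rw [hρ, mul_one]
    exact DFunLike.congr_fun hμ₁ w.1.1
  · change (ρ (i₁ w.1.1)).1.2 * (w.1.2 / s (μgp w.1.2)) = w.1.2
    rw [hρ, hi₁, mul_div_cancel]

theorem kernelProjection_coprojection (hμ₁ : μ.comp i₁ = MonoidHom.id M)
    (hμgp : μgp.comp ηQ = η.comp μ) (hsη : s.comp η = ηQ.comp i₁)
    (hs : μgp.comp s = MonoidHom.id Mgp) (m : M) : kernelProjection η hs (ηQ (i₁ m)) = 1 := by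
  refine Subtype.ext (Prod.ext rfl ?_)
  change ηQ (i₁ m) / s (μgp (ηQ (i₁ m))) = 1
  rw [show μgp (ηQ (i₁ m)) = η (μ (i₁ m)) from DFunLike.congr_fun hμgp _,
    show μ (i₁ m) = m from DFunLike.congr_fun hμ₁ m,
    show s (η m) = ηQ (i₁ m) from DFunLike.congr_fun hsη m, div_self']

theorem pullback_hom_ext (hQ : IsCommMonoidPushout fb fb i₁ i₂) (hμ₁ : μ.comp i₁ = MonoidHom.id M)
    (hηQ : IsGroupCompletion ηQ) (hsη : s.comp η = ηQ.comp i₁)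
    (hs : μgp.comp s = MonoidHom.id Mgp)
    {ρ : Q →* pullbackSubmonoid η μgp} (hρ : ∀ x, (ρ x : M × Qgp) = (μ x, ηQ x))
    {H : Type u} [CommGroup H] {e e' : pullbackSubmonoid η μgp →* H}
    (h₁ : e.comp (ρ.comp i₁) = e'.comp (ρ.comp i₁))
    (h₂ : e.comp (ρ.comp i₂) = e'.comp (ρ.comp i₂)) : e = e' := by
  let κ := kernelProjection η hs
  have decomp (g : pullbackSubmonoid η μgp →* H) (w) : g w = g (ρ (i₁ w.1.1)) * g (κ w.1.2) := by
    rw [← map_mul, mul_kernelProjection hμ₁ hsη hs hρ]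
  have hρe : e.comp ρ = e'.comp ρ := hQ.hom_ext h₁ h₂
  have κ_eq (g : pullbackSubmonoid η μgp →* H) (x : Q) :
      g (κ (ηQ x)) = g (ρ x) / g (ρ (i₁ (μ x))) := by
    rw [eq_div_iff_mul_eq', mul_comm, decomp g (ρ x), hρ]
  have hκ : e.comp κ = e'.comp κ := hηQ.hom_ext <| MonoidHom.ext fun x => by
    have hρx (y : Q) : e (ρ y) = e' (ρ y) := DFunLike.congr_fun hρe y
    simp only [MonoidHom.comp_apply, κ_eq, hρx]
  ext w
  rw [decomp e, decomp e']
  exact congrArg₂ (· * ·) (DFunLike.congr_fun h₁ _) (DFunLike.congr_fun hκ _)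

theorem exists_hom_pullback (hQ : IsCommMonoidPushout fb fb i₁ i₂) (hηQ : IsGroupCompletion ηQ)
    {ρ : Q →* pullbackSubmonoid η μgp} (hρ : ∀ x, (ρ x : M × Qgp) = (μ x, ηQ x))
    {H : Type u} [CommGroup H] {δ : M →* H} (hδ : δ.comp fb = 1) :
    ∃ e : pullbackSubmonoid η μgp →* H, e.comp (ρ.comp i₁) = 1 ∧ e.comp (ρ.comp i₂) = δ := by
  obtain ⟨t, ⟨ht₁, ht₂⟩, -⟩ := hQ.2 H 1 δ hδ.symm
  obtain ⟨e, he, -⟩ := hηQ H t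
  have heρ :
      (e.comp ((MonoidHom.snd M Qgp).comp (pullbackSubmonoid η μgp).subtype)).comp ρ = t := by
    rw [← he]
    ext x
    simp [hρ]
  exact ⟨_, by rw [← MonoidHom.comp_assoc, heρ, ht₁], by rw [← MonoidHom.comp_assoc, heρ, ht₂]⟩

/-- The repletion as the pullback of `η` and `μ^gp`; `s` is the map
`i₁^gp : M^gp → (M ⊕_P M)^gp`. -/
def repletionOfPullback (hQ : IsCommMonoidPushout fb fb i₁ i₂) (hμ₁ : μ.comp i₁ = MonoidHom.id M)
    (hμ₂ : μ.comp i₂ = MonoidHom.id M) (hη : IsGroupCompletion η) (hηQ : IsGroupCompletion ηQ)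
    (hμgp : μgp.comp ηQ = η.comp μ) (hsη : s.comp η = ηQ.comp i₁)
    (ρ : Q →* pullbackSubmonoid η μgp) (hρ : ∀ x, (ρ x : M × Qgp) = (μ x, ηQ x)) :
    Repletion fb (pullbackSubmonoid η μgp) :=
  have hs := codiagonal_comp_section hη hμ₁ hμgp hsη
  { aug := (MonoidHom.fst M Qgp).comp (pullbackSubmonoid η μgp).subtype
    inl := ρ.comp i₁
    inr := ρ.comp i₂
    unitPart := (kernelProjection η hs).comp
      ((MonoidHom.snd M Qgp).comp (pullbackSubmonoid η μgp).subtype)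
    aug_inl := fun m => (congrArg Prod.fst (hρ (i₁ m))).trans (DFunLike.congr_fun hμ₁ m)
    aug_inr := fun m => (congrArg Prod.fst (hρ (i₂ m))).trans (DFunLike.congr_fun hμ₂ m)
    inl_base := fun p => congrArg ρ (DFunLike.congr_fun hQ.1 p)
    inl_aug_mul_unitPart := mul_kernelProjection hμ₁ hsη hs hρ
    aug_unitPart := fun _ => rfl
    unitPart_inl := fun m =>
      (congrArg (fun x : M × Qgp => kernelProjection η hs x.2) (hρ (i₁ m))).trans
        (kernelProjection_coprojection hμ₁ hμgp hsη hs m)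
    existsUnique_hom := fun _ _ _ hδ =>
      existsUnique_of_exists_of_unique (exists_hom_pullback hQ hηQ hρ hδ) fun _ _ he he' =>
        pullback_hom_ext hQ hμ₁ hηQ hsη hs hρ (he.1.trans he'.1.symm) (he.2.trans he'.2.symm) }

end PullbackRepletion

section SquareZero

open TrivSqZeroExt

variable {A C W X : Type*} [CommRing A] [CommRing C] [Algebra A C] [Algebra C A]
  [CommMonoid W] [AddCommGroup X] [Module A X] [Module Aᵐᵒᵖ X] [IsCentralScalar A X]

/-- The homomorphism `w ↦ a(w) · (1 + e(w))` into the square-zero extension `A ⊕ X`. -/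
def trivSqZeroExtHom (a : W →* A) (e : W →* Multiplicative X) : W →* TrivSqZeroExt A X where
  toFun w := inl (a w) + inr (a w • (e w).toAdd)
  map_one' := by simp
  map_mul' v w := by
    ext <;> simp [mul_smul, smul_comm (a v) (a w), add_comm]

/-- The derivation given by the second component of a lift of the augmentation of `C` to the
square-zero extension `A ⊕ X`. -/
def derivationOfLift [Module C X] [IsScalarTower C A X]
    (φ : C →ₐ[A] TrivSqZeroExt A X) (hφ : ∀ c, (φ c).fst = algebraMap C A c) :
    Derivation A C X :=
  Derivation.mk' (sndHom A X ∘ₗ φ.toLinearMap) fun a b => by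
    simp [hφ]

end SquareZero

section Envelope

variable {R A P M W C X : Type u} [CommRing R] [CommRing A] [CommMonoid P] [CommMonoid M]
  [CommMonoid W] [CommRing C] [Algebra A C] [Algebra C A] {f : R →+* A} {fb : P →* M} {α : M →* A}
  {N : Repletion fb W} {ι : A →+* C} {k : W →* C}

/-- `C` is the augmented `A`-algebra universal among those receiving a second copy `ι` of `A` and
the monoid `W`, compatibly with the base `R` and with the two copies of `M` in `W`; the augmentation
is `algebraMap C A`. -/
structure IsRepleteEnvelope (f : R →+* A) (α : M →* A) (N : Repletion fb W) (ι : A →+* C)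
    (k : W →* C) : Prop where
  augmentation_algebraMap : ∀ a, algebraMap C A (algebraMap A C a) = a
  augmentation_ι : ∀ a, algebraMap C A (ι a) = a
  augmentation_k : ∀ w, algebraMap C A (k w) = α (N.aug w)
  ι_base : ∀ r, ι (f r) = algebraMap A C (f r)
  k_inl : ∀ m, k (N.inl m) = algebraMap A C (α m)
  k_inr : ∀ m, k (N.inr m) = ι (α m)
  adjoin_eq_top : Algebra.adjoin A (Set.range ι ∪ Set.range k) = ⊤
  exists_lift : ∀ (B : Type u) [CommRing B] [Algebra A B] (g : A →+* B) (h : W →* B),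
    (∀ r, g (f r) = algebraMap A B (f r)) → (∀ m, h (N.inl m) = algebraMap A B (α m)) →
    (∀ m, h (N.inr m) = g (α m)) → ∃ φ : C →ₐ[A] B, (∀ a, φ (ι a) = g a) ∧ ∀ w, φ (k w) = h w

variable [AddCommGroup X] [Module A X]

theorem LogDerivation.ext {d d' : LogDerivation R A P M f fb α X} (hD : ∀ a, d.D a = d'.D a)
    (hδ : ∀ m, d.δ m = d'.δ m) : d = d' := by
  cases d
  cases d'
  congr
  · exact funext hD
  · exact funext hδ

namespace LogDerivation

theorem D_one (d : LogDerivation R A P M f fb α X) : d.D 1 = 0 := by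
  simpa using d.leibniz 1 1

theorem D_zero (d : LogDerivation R A P M f fb α X) : d.D 0 = 0 := by
  simpa using d.D_add 0 0

theorem D_base (d : LogDerivation R A P M f fb α X) (r : R) : d.D (f r) = 0 := by
  simpa [d.D_one] using d.D_smul r 1

/-- The ring homomorphism `a ↦ a + D a` into the square-zero extension `A ⊕ X`. -/
def toTrivSqZeroExt [Module Aᵐᵒᵖ X] [IsCentralScalar A X] (d : LogDerivation R A P M f fb α X) :
    A →+* TrivSqZeroExt A X where
  toFun a := .inl a + .inr (d.D a)
  map_one' := by simp [d.D_one]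
  map_mul' a b := by ext <;> simp [d.leibniz]
  map_zero' := by simp [d.D_zero]
  map_add' a b := by ext <;> simp [d.D_add]

/-- The logarithmic part of a log derivation as a homomorphism of monoids. -/
def deltaHom (d : LogDerivation R A P M f fb α X) : M →* Multiplicative X where
  toFun m := .ofAdd (d.δ m)
  map_one' := congrArg Multiplicative.ofAdd d.delta_one
  map_mul' m m' := congrArg Multiplicative.ofAdd (d.delta_mul m m')

end LogDerivation

namespace IsRepleteEnvelope

theorem isScalarTower (hC : IsRepleteEnvelope f α N ι k) : IsScalarTower A C A :=
  .of_algebraMap_eq fun a => (hC.augmentation_algebraMap a).symm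

theorem fst_lift_eq_algebraMap [Module Aᵐᵒᵖ X] [IsCentralScalar A X]
    (hC : IsRepleteEnvelope f α N ι k) {φ : C →ₐ[A] TrivSqZeroExt A X}
    (hι : ∀ a, (φ (ι a)).fst = a) (hk : ∀ w, (φ (k w)).fst = α (N.aug w)) (c : C) :
    (φ c).fst = algebraMap C A c := by
  have := hC.isScalarTower
  have h : (TrivSqZeroExt.fstHom A A X).comp φ = IsScalarTower.toAlgHom A C A :=
    AlgHom.ext_of_adjoin_eq_top hC.adjoin_eq_top <| by
      rintro _ (⟨a, rfl⟩ | ⟨w, rfl⟩)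
      · exact (hι a).trans (hC.augmentation_ι a).symm
      · exact (hk w).trans (hC.augmentation_k w).symm
  exact DFunLike.congr_fun h c

variable [Module C X] [IsScalarTower C A X]

theorem ι_smul (hC : IsRepleteEnvelope f α N ι k) (a : A) (x : X) : ι a • x = a • x := by
  rw [← algebraMap_smul A (ι a) x, hC.augmentation_ι]

theorem k_smul (hC : IsRepleteEnvelope f α N ι k) (w : W) (x : X) :
    k w • x = α (N.aug w) • x := by
  rw [← algebraMap_smul A (k w) x, hC.augmentation_k]

/-- The logarithmic differential `w ↦ D w / w` of a derivation `D` along `k : W → C`. -/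
def dlog (hC : IsRepleteEnvelope f α N ι k) (D : Derivation A C X) : W →* Multiplicative X where
  toFun w := .ofAdd (D (k (N.unitPart w)))
  map_one' := by simp
  map_mul' v w := by
    rw [map_mul, map_mul, D.leibniz, hC.k_smul, hC.k_smul, N.aug_unitPart, N.aug_unitPart, map_one,
      one_smul, one_smul, add_comm, ofAdd_add]

theorem dlog_inl (hC : IsRepleteEnvelope f α N ι k) (D : Derivation A C X) (m : M) :
    hC.dlog D (N.inl m) = 1 := by
  change Multiplicative.ofAdd (D (k (N.unitPart (N.inl m)))) = 1
  rw [N.unitPart_inl, map_one, D.map_one_eq_zero, ofAdd_zero]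

theorem derivation_k (hC : IsRepleteEnvelope f α N ι k) (D : Derivation A C X) (w : W) :
    D (k w) = α (N.aug w) • (hC.dlog D w).toAdd := by
  conv_lhs => rw [← N.inl_aug_mul_unitPart w, map_mul, hC.k_inl, D.leibniz, D.map_algebraMap,
    smul_zero, add_zero, ← hC.k_inl, hC.k_smul, N.aug_inl]
  rfl

/-- The log derivation `a ↦ D (1 ⊗ a)`, `m ↦ dlog (1 ⊗ m)` obtained by restricting a derivation. -/
def logDerivation (hC : IsRepleteEnvelope f α N ι k) (D : Derivation A C X) :
    LogDerivation R A P M f fb α X where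
  D a := D (ι a)
  δ m := (hC.dlog D (N.inr m)).toAdd
  D_add a b := by rw [map_add, map_add]
  D_smul r a := by rw [map_mul, hC.ι_base, ← Algebra.smul_def, D.map_smul]
  leibniz a b := by rw [map_mul, D.leibniz, hC.ι_smul, hC.ι_smul]
  delta_one := by rw [map_one, map_one, toAdd_one]
  delta_mul m m' := by rw [map_mul, map_mul, toAdd_mul]
  delta_base p := by rw [← N.inl_base, hC.dlog_inl, toAdd_one]
  compat m := by rw [← hC.k_inr, hC.derivation_k, N.aug_inr]

theorem logDerivation_injective (hC : IsRepleteEnvelope f α N ι k) :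
    Function.Injective (hC.logDerivation (X := X)) := by
  intro D D' h
  have hι (a : A) : D (ι a) = D' (ι a) := congrFun (congrArg LogDerivation.D h) a
  have hδ (m : M) : hC.dlog D (N.inr m) = hC.dlog D' (N.inr m) :=
    congrFun (congrArg LogDerivation.δ h) m
  have hdlog : hC.dlog D = hC.dlog D' :=
    (N.existsUnique_hom (Multiplicative X) ((hC.dlog D').comp N.inr) (MonoidHom.ext fun p => by
      rw [MonoidHom.comp_apply, MonoidHom.comp_apply, ← N.inl_base, hC.dlog_inl,
        MonoidHom.one_apply])).unique
      ⟨MonoidHom.ext (hC.dlog_inl D), MonoidHom.ext hδ⟩ ⟨MonoidHom.ext (hC.dlog_inl D'), rfl⟩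
  refine Derivation.ext_of_adjoin_eq_top _ hC.adjoin_eq_top ?_
  rintro _ (⟨a, rfl⟩ | ⟨w, rfl⟩)
  · exact hι a
  · rw [hC.derivation_k, hC.derivation_k, hdlog]

theorem logDerivation_surjective (hC : IsRepleteEnvelope f α N ι k) :
    Function.Surjective (hC.logDerivation (X := X)) := by
  intro d
  let : Module Aᵐᵒᵖ X := Module.compHom X ((RingHom.id A).fromOpposite mul_comm)
  have : IsCentralScalar A X := ⟨fun _ _ => rfl⟩
  obtain ⟨e, ⟨he₁, he₂⟩, -⟩ := N.existsUnique_hom (Multiplicative X) d.deltaHom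
    (MonoidHom.ext fun p => congrArg Multiplicative.ofAdd (d.delta_base p))
  have he_inl (m : M) : e (N.inl m) = 1 := DFunLike.congr_fun he₁ m
  have he_inr (m : M) : (e (N.inr m)).toAdd = d.δ m := DFunLike.congr_fun he₂ m
  have he_unitPart (w : W) : e (N.unitPart w) = e w := by
    conv_rhs => rw [← N.inl_aug_mul_unitPart w, map_mul, he_inl, one_mul]
  obtain ⟨φ, hι, hk⟩ := hC.exists_lift (TrivSqZeroExt A X) d.toTrivSqZeroExt
    (trivSqZeroExtHom (α.comp N.aug) e)
    (fun r => by simp [LogDerivation.toTrivSqZeroExt, d.D_base, TrivSqZeroExt.algebraMap_eq_inl])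
    (fun m => by simp [trivSqZeroExtHom, he_inl, N.aug_inl, TrivSqZeroExt.algebraMap_eq_inl])
    (fun m => by
      simp [trivSqZeroExtHom, LogDerivation.toTrivSqZeroExt, he_inr, N.aug_inr, d.compat])
  have hφ := hC.fst_lift_eq_algebraMap (φ := φ)
    (fun a => by simp [hι, LogDerivation.toTrivSqZeroExt])
    (fun w => by simp [hk, trivSqZeroExtHom])
  refine ⟨derivationOfLift φ hφ, LogDerivation.ext (fun a => ?_) fun m => ?_⟩
  · change (φ (ι a)).snd = d.D a
    simp [hι, LogDerivation.toTrivSqZeroExt]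
  · change (φ (k (N.unitPart (N.inr m)))).snd = d.δ m
    simp [hk, trivSqZeroExtHom, he_unitPart, he_inr, N.aug_unitPart]

end IsRepleteEnvelope

namespace IsRepleteEnvelope

/-- The universal log derivation, with values in `I/I²` for the augmentation ideal `I` of `C`. -/
def universalLogDerivation (hC : IsRepleteEnvelope f α N ι k) :
    LogDerivation R A P M f fb α (RingHom.ker (algebraMap C A)).Cotangent :=
  have := hC.isScalarTower
  have := isScalarTower_cotangent_ker_algebraMap (A := A) (C := C)
  hC.logDerivation (augmentationDerivation A C)

theorem universalLogDerivation_bijective (hC : IsRepleteEnvelope f α N ι k) :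
    Function.Bijective fun φ : (RingHom.ker (algebraMap C A)).Cotangent →ₗ[A] X =>
      hC.universalLogDerivation.map φ := by
  have := hC.isScalarTower
  let : Module C X := Module.compHom X (algebraMap C A)
  have : IsScalarTower C A X := .of_algebraMap_smul fun _ _ => rfl
  have : IsScalarTower A C X := .of_algebraMap_smul fun a x => by
    rw [← algebraMap_smul A, hC.augmentation_algebraMap]
  have := isScalarTower_cotangent_ker_algebraMap (A := A) (C := C)
  have map_eq (φ : (RingHom.ker (algebraMap C A)).Cotangent →ₗ[A] X) :
      hC.universalLogDerivation.map φ =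
        hC.logDerivation ((φ.restrictScalars C).compDer (augmentationDerivation A C)) := rfl
  constructor
  · intro φ φ' h
    have hder := hC.logDerivation_injective ((map_eq φ).symm.trans (h.trans (map_eq φ')))
    exact cotangent_hom_ext fun c => DFunLike.congr_fun hder c
  · intro d
    obtain ⟨D, rfl⟩ := hC.logDerivation_surjective d
    obtain ⟨φ, hφ⟩ := exists_comp_augmentationDerivation D
    exact ⟨φ, (map_eq φ).trans (congrArg hC.logDerivation (Derivation.ext hφ))⟩

theorem exists_natural_equiv (hC : IsRepleteEnvelope f α N ι k) :
    ∃ Φ : ∀ (X : Type u) [AddCommGroup X] [Module A X],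
        LogDerivation R A P M f fb α X ≃ ((RingHom.ker (algebraMap C A)).Cotangent →ₗ[A] X),
      ∀ (X X' : Type u) [AddCommGroup X] [Module A X] [AddCommGroup X'] [Module A X']
        (g : X →ₗ[A] X') (d : LogDerivation R A P M f fb α X),
        Φ X' (d.map g) = g.comp (Φ X d) := by
  refine ⟨fun X _ _ => (Equiv.ofBijective _ hC.universalLogDerivation_bijective).symm, ?_⟩
  intro X X' _ _ _ _ g d
  obtain ⟨φ, rfl⟩ := hC.universalLogDerivation_bijective.surjective d
  rw [Equiv.ofBijective_symm_apply_apply]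
  exact Equiv.ofBijective_symm_apply_apply _ hC.universalLogDerivation_bijective (g.comp φ)

end IsRepleteEnvelope

end Envelope

section TensorEnvelope

theorem exists_ringHom_tensorProduct {T S U B : Type*} [CommRing T] [CommRing S] [CommRing U]
    [CommRing B] [Algebra T S] [Algebra T U] (g : S →+* B) (h : U →+* B)
    (hgh : g.comp (algebraMap T S) = h.comp (algebraMap T U)) :
    ∃ φ : S ⊗[T] U →+* B, ∀ s t, φ (s ⊗ₜ t) = g s * h t := by
  let : Algebra T B := (g.comp (algebraMap T S)).toAlgebra
  let g' : S →ₐ[T] B := { g with commutes' := fun _ => rfl }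
  let h' : U →ₐ[T] B := { h with commutes' := fun t => (RingHom.congr_fun hgh t).symm }
  exact ⟨(Algebra.TensorProduct.lift g' h' fun _ _ => Commute.all _ _).toRingHom,
    Algebra.TensorProduct.lift_tmul _ _ _⟩

variable (R A Q W : Type u) [CommRing R] [CommRing A] [CommMonoid Q] [CommMonoid W] [Algebra R A]
  [Algebra (MonoidAlgebra ℤ Q) (A ⊗[R] A)] [Algebra (MonoidAlgebra ℤ Q) (MonoidAlgebra ℤ W)]

/-- The ring `C`, for `Q = M ⊕_P M` with repletion `W`. -/
abbrev RepleteTensor : Type u := (A ⊗[R] A) ⊗[MonoidAlgebra ℤ Q] MonoidAlgebra ℤ W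

/-- The second copy of `A` in `C`, namely `a ↦ (1 ⊗ a) ⊗ 1`. -/
noncomputable def repleteTensorRight : A →+* RepleteTensor R A Q W :=
  Algebra.TensorProduct.includeLeftRingHom.comp
    (Algebra.TensorProduct.includeRight : A →ₐ[R] A ⊗[R] A).toRingHom

/-- The canonical map from the repletion to `C`, namely `w ↦ (1 ⊗ 1) ⊗ w`. -/
noncomputable def repleteTensorMonoid : W →* RepleteTensor R A Q W :=
  ((Algebra.TensorProduct.includeRight :
    MonoidAlgebra ℤ W →ₐ[MonoidAlgebra ℤ Q] RepleteTensor R A Q W) : _ →* _).comp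
    (MonoidAlgebra.of ℤ W)

variable {R A Q W} {P M : Type u} [CommMonoid P] [CommMonoid M] [Algebra A (RepleteTensor R A Q W)]

theorem algebraMap_mul_repleteTensorRight
    (hu : ∀ a, algebraMap A (RepleteTensor R A Q W) a = (a ⊗ₜ 1) ⊗ₜ 1) (a b : A) :
    algebraMap A _ a * repleteTensorRight R A Q W b = (a ⊗ₜ[R] b) ⊗ₜ 1 := by
  rw [hu]
  change ((a ⊗ₜ[R] (1 : A)) ⊗ₜ 1) * (((1 : A) ⊗ₜ[R] b) ⊗ₜ 1) = _
  simp only [Algebra.TensorProduct.tmul_mul_tmul, one_mul, mul_one]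

theorem adjoin_repleteTensor_eq_top
    (hu : ∀ a, algebraMap A (RepleteTensor R A Q W) a = (a ⊗ₜ 1) ⊗ₜ 1) :
    Algebra.adjoin A (Set.range (repleteTensorRight R A Q W) ∪
      Set.range (repleteTensorMonoid R A Q W)) = ⊤ := by
  set S := Algebra.adjoin A (Set.range (repleteTensorRight R A Q W) ∪
      Set.range (repleteTensorMonoid R A Q W))
  have left_mem (x : A ⊗[R] A) : (x ⊗ₜ 1 : RepleteTensor R A Q W) ∈ S := by
    induction x using TensorProduct.induction_on with
    | zero => rw [TensorProduct.zero_tmul]; exact zero_mem S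
    | add x y hx hy => rw [TensorProduct.add_tmul]; exact add_mem hx hy
    | tmul a b =>
      exact algebraMap_mul_repleteTensorRight hu a b ▸ mul_mem (S.algebraMap_mem a)
        (Algebra.subset_adjoin (Or.inl (Set.mem_range_self b)))
  have right_mem (y : MonoidAlgebra ℤ W) : (1 ⊗ₜ y : RepleteTensor R A Q W) ∈ S := by
    induction y using MonoidAlgebra.induction_on with
    | of w => exact Algebra.subset_adjoin (Or.inr (Set.mem_range_self w))
    | add x y hx hy => rw [TensorProduct.tmul_add]; exact add_mem hx hy
    | smul n y hy =>
      have h := zsmul_mem hy n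
      rwa [← Algebra.TensorProduct.includeRight_apply, ← map_zsmul] at h
  refine Algebra.eq_top_iff.mpr fun c => ?_
  induction c using TensorProduct.induction_on with
  | zero => exact zero_mem S
  | add x y hx hy => exact add_mem hx hy
  | tmul x y =>
    have h := mul_mem (left_mem x) (right_mem y)
    rwa [Algebra.TensorProduct.tmul_mul_tmul, one_mul, mul_one] at h

theorem exists_lift_repleteTensor {fb : P →* M} {α : M →* A} {i₁ i₂ : M →* Q}
    (hQ : IsCommMonoidPushout fb fb i₁ i₂) {ρ : Q →* W}
    (hθ₁ : ∀ m, algebraMap (MonoidAlgebra ℤ Q) (A ⊗[R] A) (.single (i₁ m) 1) = α m ⊗ₜ 1)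
    (hθ₂ : ∀ m, algebraMap (MonoidAlgebra ℤ Q) (A ⊗[R] A) (.single (i₂ m) 1) = 1 ⊗ₜ α m)
    (hρ : ∀ x, algebraMap (MonoidAlgebra ℤ Q) (MonoidAlgebra ℤ W) (.single x 1) = .single (ρ x) 1)
    (hu : ∀ a, algebraMap A (RepleteTensor R A Q W) a = (a ⊗ₜ 1) ⊗ₜ 1)
    {B : Type u} [CommRing B] [Algebra A B] {g : A →+* B} {h : W →* B}
    (hg : ∀ r, g (algebraMap R A r) = algebraMap A B (algebraMap R A r))
    (h₁ : ∀ m, h (ρ (i₁ m)) = algebraMap A B (α m)) (h₂ : ∀ m, h (ρ (i₂ m)) = g (α m)) :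
    ∃ φ : RepleteTensor R A Q W →ₐ[A] B, (∀ a, φ (repleteTensorRight R A Q W a) = g a) ∧
      ∀ w, φ (repleteTensorMonoid R A Q W w) = h w := by
  obtain ⟨G, hG⟩ := exists_ringHom_tensorProduct (algebraMap A B) g
    (RingHom.ext fun r => (hg r).symm)
  let K : MonoidAlgebra ℤ W →+* B := (MonoidAlgebra.lift ℤ B W h).toRingHom
  have hK (w : W) : K (.single w 1) = h w := by simp [K, MonoidAlgebra.lift_single]
  have hmonoid : (G.comp (algebraMap (MonoidAlgebra ℤ Q) (A ⊗[R] A)) :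
      MonoidAlgebra ℤ Q →* B).comp (MonoidAlgebra.of ℤ Q) = h.comp ρ := by
    refine hQ.hom_ext (MonoidHom.ext fun m => ?_) (MonoidHom.ext fun m => ?_)
    · change G (algebraMap _ _ (MonoidAlgebra.single (i₁ m) 1)) = h (ρ (i₁ m))
      rw [hθ₁, hG, map_one, mul_one, h₁]
    · change G (algebraMap _ _ (MonoidAlgebra.single (i₂ m) 1)) = h (ρ (i₂ m))
      rw [hθ₂, hG, map_one, one_mul, h₂]
  have hGK : G.comp (algebraMap (MonoidAlgebra ℤ Q) (A ⊗[R] A)) = K.comp (algebraMap _ _) := by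
    refine MonoidAlgebra.ringHom_ext' (Subsingleton.elim _ _) (hmonoid.trans ?_)
    ext x
    change h (ρ x) = K (algebraMap _ _ (MonoidAlgebra.single x 1))
    rw [hρ, hK]
  obtain ⟨φ, hφ⟩ := exists_ringHom_tensorProduct G K hGK
  refine ⟨{ φ with commutes' := fun a => ?_ }, fun a => ?_, fun w => ?_⟩
  · change φ (algebraMap A _ a) = _
    rw [hu, hφ, hG, map_one, map_one, mul_one, mul_one]
  · change φ ((1 ⊗ₜ a) ⊗ₜ 1) = g a
    rw [hφ, hG, map_one, map_one, mul_one, one_mul]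
  · change φ (1 ⊗ₜ MonoidAlgebra.single w 1) = h w
    rw [hφ, map_one, one_mul, hK]

theorem isRepleteEnvelope_repleteTensor [Algebra (RepleteTensor R A Q W) A] {fb : P →* M}
    {α : M →* A} {i₁ i₂ : M →* Q} (hQ : IsCommMonoidPushout fb fb i₁ i₂) {N : Repletion fb W}
    {ρ : Q →* W} (hinl : N.inl = ρ.comp i₁) (hinr : N.inr = ρ.comp i₂)
    (hθ₁ : ∀ m, algebraMap (MonoidAlgebra ℤ Q) (A ⊗[R] A) (.single (i₁ m) 1) = α m ⊗ₜ 1)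
    (hθ₂ : ∀ m, algebraMap (MonoidAlgebra ℤ Q) (A ⊗[R] A) (.single (i₂ m) 1) = 1 ⊗ₜ α m)
    (hρ : ∀ x, algebraMap (MonoidAlgebra ℤ Q) (MonoidAlgebra ℤ W) (.single x 1) = .single (ρ x) 1)
    (hε : ∀ (a b : A) (w : W),
      algebraMap (RepleteTensor R A Q W) A ((a ⊗ₜ b) ⊗ₜ .single w 1) = a * b * α (N.aug w))
    (hu : ∀ a, algebraMap A (RepleteTensor R A Q W) a = (a ⊗ₜ 1) ⊗ₜ 1) :
    IsRepleteEnvelope (algebraMap R A) α N (repleteTensorRight R A Q W)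
      (repleteTensorMonoid R A Q W) := by
  have k_ρ (x : Q) : repleteTensorMonoid R A Q W (ρ x) =
      algebraMap (MonoidAlgebra ℤ Q) (A ⊗[R] A) (.single x 1) ⊗ₜ 1 := by
    change (1 : A ⊗[R] A) ⊗ₜ MonoidAlgebra.single (ρ x) 1 = _
    rw [← hρ]
    exact (Algebra.TensorProduct.tmul_one_eq_one_tmul _).symm
  exact
    { augmentation_algebraMap := fun a => by
        rw [hu]
        refine (hε a 1 1).trans ?_
        rw [map_one, map_one, mul_one, mul_one]
      augmentation_ι := fun a => (hε 1 a 1).trans <| by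
        rw [map_one, map_one, one_mul, mul_one]
      augmentation_k := fun w => (hε 1 1 w).trans <| by
        rw [one_mul, one_mul]
      ι_base := fun r => by
        rw [hu, Algebra.TensorProduct.tmul_one_eq_one_tmul]
        rfl
      k_inl := fun m => by rw [hinl, MonoidHom.comp_apply, k_ρ, hθ₁, hu]
      k_inr := fun m => by
        rw [hinr, MonoidHom.comp_apply, k_ρ, hθ₂]
        rfl
      adjoin_eq_top := adjoin_repleteTensor_eq_top hu
      exists_lift := fun B _ _ g h hg h₁ h₂ =>
        exists_lift_repleteTensor hQ hθ₁ hθ₂ hρ hu hg (by simpa [hinl] using h₁)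
          (by simpa [hinr] using h₂) }

end TensorEnvelope

/-- For a map `(f, f♭) : (R, P) → (A, M)` of pre-log rings and an `A`-module
`X`, there is a bijection, natural in `X`, between log derivations of `(A, M)`
over `(R, P)` with values in `X` and `A`-module homomorphisms `I/I² → X`,
where `I` is the kernel of the augmentation
`ε : C = (A ⊗_R A) ⊗_{ℤ[M ⊕_P M]} ℤ[(M ⊕_P M)^rep] → A`. -/
theorem logDerivation_corepresented
    (R A P M Q Mgp Qgp : Type u) [CommRing R] [CommRing A]
    [CommMonoid P] [CommMonoid M] [CommMonoid Q] [CommGroup Mgp] [CommGroup Qgp]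
    -- the map of pre-log rings
    (f : R →+* A) (fb : P →* M) (β : P →* R) (α : M →* A)
    (hcompat : ∀ p : P, α (fb p) = f (β p))
    -- `Q = M ⊕_P M`, the pushout in commutative monoids of `M ← P → M`
    (i₁ i₂ : M →* Q) (hQ : IsCommMonoidPushout fb fb i₁ i₂)
    -- `μ : M ⊕_P M → M` is the codiagonal
    (μ : Q →* M) (hμ₁ : μ.comp i₁ = MonoidHom.id M) (hμ₂ : μ.comp i₂ = MonoidHom.id M)
    -- group completions of `M` and of `M ⊕_P M`
    (η : M →* Mgp) (hη : IsGroupCompletion η)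
    (ηQ : Q →* Qgp) (hηQ : IsGroupCompletion ηQ)
    -- `μ^gp : (M ⊕_P M)^gp → M^gp`
    (μgp : Qgp →* Mgp) (hμgp : μgp.comp ηQ = η.comp μ) :
    -- `A` is an `R`-algebra via `f`
    letI : Algebra R A := f.toAlgebra
    -- the repletion `(M ⊕_P M)^rep` is the pullback of `η` and `μ^gp`
    ∀ (rep : Submonoid (M × Qgp)), rep = pullbackSubmonoid η μgp →
    -- the canonical map `M ⊕_P M → (M ⊕_P M)^rep`
    ∀ (ρ : Q →* rep), (∀ x : Q, (ρ x : M × Qgp) = (μ x, ηQ x)) →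
    -- the monoid map `M ⊕_P M → (A ⊗_R A, ·)` with components
    -- `m ↦ α(m) ⊗ 1` and `m ↦ 1 ⊗ α(m)`
    ∀ (θ : Q →* (A ⊗[R] A)),
      (∀ m : M, θ (i₁ m) = α m ⊗ₜ[R] 1) → (∀ m : M, θ (i₂ m) = 1 ⊗ₜ[R] α m) →
    -- the induced ring map `ℤ[M ⊕_P M] → A ⊗_R A`
    ∀ (ψ : MonoidAlgebra ℤ Q →+* (A ⊗[R] A)),
      (∀ x : Q, ψ (MonoidAlgebra.single x 1) = θ x) →
    -- the ring map `ℤ[M ⊕_P M] → ℤ[(M ⊕_P M)^rep]` induced by `ρ`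
    ∀ (χ : MonoidAlgebra ℤ Q →+* MonoidAlgebra ℤ ↥rep),
      (∀ x : Q, χ (MonoidAlgebra.single x 1) = MonoidAlgebra.single (ρ x) 1) →
    letI : Algebra (MonoidAlgebra ℤ Q) (A ⊗[R] A) := ψ.toAlgebra
    letI : Algebra (MonoidAlgebra ℤ Q) (MonoidAlgebra ℤ ↥rep) := χ.toAlgebra
    -- the augmentation `ε : C → A`
    ∀ (ε : ((A ⊗[R] A) ⊗[MonoidAlgebra ℤ Q] MonoidAlgebra ℤ ↥rep) →+* A),
      (∀ (a b : A) (w : rep),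
        ε ((a ⊗ₜ[R] b) ⊗ₜ[MonoidAlgebra ℤ Q] MonoidAlgebra.single w 1) =
          a * b * α (w : M × Qgp).1) →
    -- the unit `A → C`, making `I/I²` an `A`-module
    ∀ (u : A →+* ((A ⊗[R] A) ⊗[MonoidAlgebra ℤ Q] MonoidAlgebra ℤ ↥rep)),
      (∀ a : A, u a = (a ⊗ₜ[R] (1 : A)) ⊗ₜ[MonoidAlgebra ℤ Q]
        (1 : MonoidAlgebra ℤ ↥rep)) →
    letI : Module A (RingHom.ker ε).Cotangent := Module.compHom _ u
    ∃ Φ : ∀ (X : Type u) [AddCommGroup X] [Module A X],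
        LogDerivation R A P M f fb α X ≃ ((RingHom.ker ε).Cotangent →ₗ[A] X),
      ∀ (X X' : Type u) [AddCommGroup X] [Module A X] [AddCommGroup X']
        [Module A X'] (g : X →ₗ[A] X') (d : LogDerivation R A P M f fb α X),
        Φ X' (d.map g) = g.comp (Φ X d) := by
  let : Algebra R A := f.toAlgebra
  rintro _ rfl ρ hρ θ hθ₁ hθ₂ ψ hψ χ hχ
  let : Algebra (MonoidAlgebra ℤ Q) (A ⊗[R] A) := ψ.toAlgebra
  let : Algebra (MonoidAlgebra ℤ Q) (MonoidAlgebra ℤ (pullbackSubmonoid η μgp)) := χ.toAlgebra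
  intro ε hε u hu
  obtain ⟨s, hs, -⟩ := hη Qgp (ηQ.comp i₁)
  let N := repletionOfPullback hQ hμ₁ hμ₂ hη hηQ hμgp hs ρ hρ
  let C := RepleteTensor R A Q (pullbackSubmonoid η μgp)
  let : Algebra A C := u.toAlgebra
  let : Algebra C A := ε.toAlgebra
  have hC := isRepleteEnvelope_repleteTensor (R := R) (A := A) (N := N) hQ rfl rfl
    (fun m => (hψ _).trans (hθ₁ m)) (fun m => (hψ _).trans (hθ₂ m)) hχ hε hu
  exact hC.exists_natural_equiv
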